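/- Let ℓ ≥ 2, let A be an essential hyperplane arrangement in K^ℓ, let H ∈ A, and suppose A' = A \ {H} is also essential and nonempty. Let r = r(A), r' = r(A') and r'' = r(A^H), where A^H is the restricted arrangement in H ≅ K^{ℓ-1}. If r = r', then r'' ≤ r. -/

import Mathlib

open Classical MvPolynomial

variable {K : Type*} [Field K] [CharZero K] {ℓ : ℕ}

/-- A (central) hyperplane arrangement: a finite set of nonzero linear forms,
pairwise non-proportional. -/
def IsArrangement (A : Finset (MvPolynomial (Fin ℓ) K)) : Prop :=
  (∀ α ∈ A, α ≠ 0 ∧ α.IsHomogeneous 1) ∧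
    ∀ α ∈ A, ∀ β ∈ A, α ≠ β → ∀ c : K, α ≠ c • β

/-- The arrangement is essential: the common zero set of its forms is `{0}`. -/
def IsEssential (A : Finset (MvPolynomial (Fin ℓ) K)) : Prop :=
  ∀ v : Fin ℓ → K, (∀ α ∈ A, eval v α = 0) → v = 0

/-- The defining polynomial `Q(A)`. -/
noncomputable def Qpoly (A : Finset (MvPolynomial (Fin ℓ) K)) : MvPolynomial (Fin ℓ) K :=
  ∏ α ∈ A, α

/-- Apply a derivation `θ = Σ θ_j ∂_j` to a polynomial. -/
noncomputable def applyDer (θ : Fin ℓ → MvPolynomial (Fin ℓ) K)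
    (f : MvPolynomial (Fin ℓ) K) : MvPolynomial (Fin ℓ) K :=
  ∑ j, θ j * pderiv j f

/-- The minimal degree of a Jacobian relation `r(A)`. -/
noncomputable def mdr (A : Finset (MvPolynomial (Fin ℓ) K)) : ℕ :=
  sInf {r | ∃ θ : Fin ℓ → MvPolynomial (Fin ℓ) K, θ ≠ 0 ∧
    (∀ j, (θ j).IsHomogeneous r) ∧ applyDer θ (Qpoly A) = 0}

/-- The number of elements `|A^H|` of the restriction of `A` to `H`:
the number of distinct subspaces `H ∩ ker α_L`, `L ∈ A \ {H}`. -/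
noncomputable def restCard (A : Finset (MvPolynomial (Fin ℓ) K))
    (H : MvPolynomial (Fin ℓ) K) : ℕ :=
  ((A.erase H).image fun L => {v : Fin ℓ → K | eval v H = 0 ∧ eval v L = 0}).card

/-- `B` is a realization (in `ℓ - 1` variables) of the restricted arrangement `A^H`:
there is an injective linear parametrization `e` of the hyperplane `H = ker α_H`
such that the zero sets of the forms of `B` correspond exactly to the traces
`H ∩ ker α_L`, `L ∈ A \ {H}`, of the other hyperplanes of `A` on `H`. -/
def IsRestrictionOf (A : Finset (MvPolynomial (Fin ℓ) K)) (H : MvPolynomial (Fin ℓ) K)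
    (B : Finset (MvPolynomial (Fin (ℓ - 1)) K)) : Prop :=
  IsArrangement B ∧
  ∃ e : (Fin (ℓ - 1) → K) →ₗ[K] (Fin ℓ → K),
    Function.Injective e ∧ (∀ w, eval (e w) H = 0) ∧
    (B.image fun β => {w : Fin (ℓ - 1) → K | eval w β = 0}) =
      ((A.erase H).image fun L => {w : Fin (ℓ - 1) → K | eval (e w) L = 0})

set_option linter.unusedSectionVars false

lemma applyDer_mul (θ : Fin ℓ → MvPolynomial (Fin ℓ) K) (f g : MvPolynomial (Fin ℓ) K) :
    applyDer θ (f * g) = applyDer θ f * g + f * applyDer θ g := by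
  simp only [applyDer, pderiv_mul, Finset.sum_mul, Finset.mul_sum, ← Finset.sum_add_distrib]
  exact Finset.sum_congr rfl fun j _ => by ring

lemma applyDer_euler {f : MvPolynomial (Fin ℓ) K} {n : ℕ} (hf : f.IsHomogeneous n)
    (g : MvPolynomial (Fin ℓ) K) :
    applyDer (fun j => g * X j) f = g * ((n : MvPolynomial (Fin ℓ) K) * f) := by
  have h := hf.sum_X_mul_pderiv
  rw [nsmul_eq_mul] at h
  rw [← h, applyDer, Finset.mul_sum]
  exact Finset.sum_congr rfl fun j _ => by ring

lemma applyDer_sub (θ ψ : Fin ℓ → MvPolynomial (Fin ℓ) K) (f : MvPolynomial (Fin ℓ) K) :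
    applyDer (fun j => θ j - ψ j) f = applyDer θ f - applyDer ψ f := by
  simp only [applyDer, sub_mul, Finset.sum_sub_distrib]

lemma applyDer_mul_left (a : MvPolynomial (Fin ℓ) K) (ψ : Fin ℓ → MvPolynomial (Fin ℓ) K)
    (f : MvPolynomial (Fin ℓ) K) :
    applyDer (fun j => a * ψ j) f = a * applyDer ψ f := by
  simp only [applyDer, Finset.mul_sum, mul_assoc]

lemma hom_cancel {f g : MvPolynomial (Fin ℓ) K} {a b : ℕ} (hf : f.IsHomogeneous a)
    (hf0 : f ≠ 0) (hfg : (f * g).IsHomogeneous b) :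
    g = 0 ∨ ∃ c, a + c = b ∧ g.IsHomogeneous c := by
  by_cases hg : g = 0
  · exact Or.inl hg
  right
  have h1 := hfg.totalDegree (mul_ne_zero hf0 hg)
  rw [totalDegree_mul_of_isDomain hf0 hg, hf.totalDegree hf0] at h1
  refine ⟨g.totalDegree, h1, ?_⟩
  set c := g.totalDegree
  letI : GradedAlgebra (homogeneousSubmodule (Fin ℓ) K) := MvPolynomial.gradedAlgebra
  have h2 := DirectSum.coe_decompose_mul_add_of_left_mem (homogeneousSubmodule (Fin ℓ) K)
    (a := f) (b := g) (i := a) (j := c) hf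
  rw [h1, DirectSum.decompose_of_mem_same _ hfg] at h2
  have h3 := mul_left_cancel₀ hf0 h2
  rw [h3]
  exact (DirectSum.decompose (homogeneousSubmodule (Fin ℓ) K) g c).2

lemma Qpoly_ne_zero {A : Finset (MvPolynomial (Fin ℓ) K)} (hA : IsArrangement A) :
    Qpoly A ≠ 0 := Finset.prod_ne_zero_iff.2 fun α h => (hA.1 α h).1

lemma Qpoly_hom {A : Finset (MvPolynomial (Fin ℓ) K)} (hA : IsArrangement A) :
    (Qpoly A).IsHomogeneous A.card := by
  have := IsHomogeneous.prod A id (fun _ => 1) fun α h => (hA.1 α h).2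
  simpa [Qpoly] using this

lemma Qpoly_dvd {A : Finset (MvPolynomial (Fin ℓ) K)} (θ : Fin ℓ → MvPolynomial (Fin ℓ) K)
    (h : ∀ α ∈ A, α ∣ applyDer θ α) : Qpoly A ∣ applyDer θ (Qpoly A) := by
  unfold Qpoly
  induction A using Finset.induction_on with
  | empty => simp
  | insert a s ha ih =>
    rw [Finset.prod_insert ha, applyDer_mul]
    refine dvd_add (mul_dvd_mul_right (h a (by simp)) _) (mul_dvd_mul_left _ (ih ?_))
    exact fun α hα => h α (by simp [hα])

lemma applyDer_hom {θ : Fin ℓ → MvPolynomial (Fin ℓ) K} {r n : ℕ} {f : MvPolynomial (Fin ℓ) K}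
    (hθ : ∀ j, (θ j).IsHomogeneous r) (hf : f.IsHomogeneous n) :
    (applyDer θ f).IsHomogeneous (r + (n - 1)) :=
  IsHomogeneous.sum _ _ _ fun j _ => (hθ j).mul hf.pderiv

lemma proj_lemma {A : Finset (MvPolynomial (Fin ℓ) K)} (hA : IsArrangement A)
    (hne : A.Nonempty) {θ : Fin ℓ → MvPolynomial (Fin ℓ) K} {r : ℕ}
    (hθ : ∀ j, (θ j).IsHomogeneous r) (h : ∀ α ∈ A, α ∣ applyDer θ α) (hr : r < mdr A) :
    ∃ f : MvPolynomial (Fin ℓ) K, (f = 0 ∨ ∃ c, c + 1 = r ∧ f.IsHomogeneous c) ∧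
      ∀ j, θ j = f * X j := by
  obtain ⟨g, hg⟩ := Qpoly_dvd θ h
  have hn : A.card ≠ 0 := by simpa using hne.ne_empty
  have hn' : (A.card : K) ≠ 0 := by exact_mod_cast hn
  have hQ := Qpoly_hom hA
  have h1 := applyDer_hom hθ hQ
  rw [hg] at h1
  have h2 := hom_cancel hQ (Qpoly_ne_zero hA) h1
  have h3 : C (A.card : K)⁻¹ * g = 0 ∨
      ∃ c, c + 1 = r ∧ (C (A.card : K)⁻¹ * g).IsHomogeneous c := by
    rcases h2 with h2 | ⟨c, hc, h2⟩
    · left; simp [h2]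
    · exact Or.inr ⟨c, by omega, h2.C_mul _⟩
  refine ⟨C (A.card : K)⁻¹ * g, h3, ?_⟩
  set f := C (A.card : K)⁻¹ * g with hf
  by_contra hcon
  apply Nat.notMem_of_lt_sInf hr
  refine ⟨fun j => θ j - f * X j, ?_, ?_, ?_⟩
  · intro h0
    exact hcon fun j => sub_eq_zero.1 (congrFun h0 j)
  · intro j
    refine (hθ j).sub ?_
    rcases h3 with h3 | ⟨c, hc, h3⟩
    · rw [h3, zero_mul]; exact isHomogeneous_zero _ _ _
    · rw [← hc]; exact h3.mul (isHomogeneous_X _ _)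
  · rw [applyDer_sub, applyDer_euler hQ, hg, hf]
    have : C (A.card : K)⁻¹ * (A.card : MvPolynomial (Fin ℓ) K) = 1 := by
      rw [← map_natCast (C : K →+* MvPolynomial (Fin ℓ) K), ← C_mul, inv_mul_cancel₀ hn', C_1]
    linear_combination (-(g * Qpoly A)) * this

lemma form_prime {α : MvPolynomial (Fin ℓ) K} (h0 : α ≠ 0) (h : α.IsHomogeneous 1) :
    Prime α := by
  refine (irreducible_of_totalDegree_eq_one (h.totalDegree h0) ?_).prime
  intro x hx
  obtain ⟨d, hd⟩ := ne_zero_iff.1 h0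
  by_contra hu
  have hx0 : x = 0 := by simpa using hu
  exact hd (by simpa [hx0] using hx d)

lemma form_not_dvd {A : Finset (MvPolynomial (Fin ℓ) K)} (hA : IsArrangement A)
    {α β : MvPolynomial (Fin ℓ) K} (hα : α ∈ A) (hβ : β ∈ A) (hne : α ≠ β) : ¬ α ∣ β := by
  rintro ⟨g, hg⟩
  have h1 := (hA.1 β hβ).2
  rw [hg] at h1
  rcases hom_cancel (hA.1 α hα).2 (hA.1 α hα).1 h1 with h2 | ⟨c, hc, h2⟩
  · exact (hA.1 β hβ).1 (by rw [hg, h2, mul_zero])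
  · have : c = 0 := by omega
    subst this
    rw [← totalDegree_zero_iff_isHomogeneous, totalDegree_eq_zero_iff_eq_C] at h2
    refine hA.2 β hβ α hα hne.symm (coeff 0 g) ?_
    rw [smul_eq_C_mul, ← h2, hg, mul_comm]

lemma dvd_of_applyDer_eq_zero {A : Finset (MvPolynomial (Fin ℓ) K)} (hA : IsArrangement A)
    {θ : Fin ℓ → MvPolynomial (Fin ℓ) K} (h : applyDer θ (Qpoly A) = 0) :
    ∀ α ∈ A, α ∣ applyDer θ α := by
  intro α hα
  have hp := form_prime (hA.1 α hα).1 (hA.1 α hα).2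
  rw [Qpoly, ← Finset.mul_prod_erase A _ hα, applyDer_mul] at h
  have h1 : α ∣ applyDer θ α * ∏ x ∈ A.erase α, x :=
    (dvd_add_left (dvd_mul_right _ _)).1 (h ▸ dvd_zero α)
  refine (hp.dvd_or_dvd h1).resolve_right fun h2 => ?_
  obtain ⟨β, hβ, h3⟩ := (hp.dvd_finsetProd_iff _).1 h2
  exact form_not_dvd hA hα (Finset.mem_of_mem_erase hβ) (Finset.ne_of_mem_erase hβ).symm h3

lemma exists_rel (hl : 2 ≤ ℓ) {A : Finset (MvPolynomial (Fin ℓ) K)} (hA : IsArrangement A) :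
    ∃ θ : Fin ℓ → MvPolynomial (Fin ℓ) K, θ ≠ 0 ∧
    (∀ j, (θ j).IsHomogeneous (mdr A)) ∧ applyDer θ (Qpoly A) = 0 := by
  have : {r | ∃ θ : Fin ℓ → MvPolynomial (Fin ℓ) K, θ ≠ 0 ∧
    (∀ j, (θ j).IsHomogeneous r) ∧ applyDer θ (Qpoly A) = 0}.Nonempty := by
    let a : Fin ℓ := ⟨0, by omega⟩
    let b : Fin ℓ := ⟨1, by omega⟩
    have hab : a ≠ b := by simp [a, b]
    by_cases h0 : pderiv a (Qpoly A) = 0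
    · refine ⟨0, Pi.single a 1, ?_, ?_, ?_⟩
      · simp
      · intro j
        by_cases hj : j = a
        · subst hj; simpa using isHomogeneous_one _ _
        · simpa [hj] using isHomogeneous_zero _ _ _
      · rw [applyDer, Finset.sum_eq_single a]
        · simp [h0]
        · intro j _ hj; simp [hj]
        · simp
    · refine ⟨A.card - 1, Pi.single b (pderiv a (Qpoly A)) - Pi.single a (pderiv b (Qpoly A)),
        ?_, ?_, ?_⟩
      · intro h
        have := congrFun h b
        simp [hab.symm] at this
        exact h0 this
      · have hs : ∀ (i j : Fin ℓ) (k : Fin ℓ), ((Pi.single i (pderiv j (Qpoly A)) :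
            Fin ℓ → MvPolynomial (Fin ℓ) K) k).IsHomogeneous (A.card - 1) := by
          intro i j k
          by_cases hk : k = i
          · subst hk; simpa using (Qpoly_hom hA).pderiv
          · simpa [hk] using isHomogeneous_zero _ _ _
        intro j
        exact (hs _ _ _).sub (hs _ _ _)
      · have hs : ∀ (i : Fin ℓ) (g : MvPolynomial (Fin ℓ) K),
            applyDer (Pi.single i g) (Qpoly A) = g * pderiv i (Qpoly A) := by
          intro i g
          rw [applyDer, Finset.sum_eq_single i]
          · simp
          · intro j _ hj; simp [hj]
          · simp
        have := applyDer_sub (Pi.single b (pderiv a (Qpoly A)))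
          (Pi.single a (pderiv b (Qpoly A))) (Qpoly A)
        rw [hs, hs] at this
        refine Eq.trans this ?_
        ring
  exact Nat.sInf_mem this

lemma exists_linear {n : ℕ} {f : MvPolynomial (Fin n) K} (hf : f.IsHomogeneous 1) :
    ∃ φ : (Fin n → K) →ₗ[K] K, ∀ v, eval v f = φ v := by
  have hf' : f ∈ homogeneousSubmodule (Fin n) K 1 := hf
  rw [homogeneousSubmodule_one_eq_span_X] at hf'
  induction hf' using Submodule.span_induction with
  | mem x hx =>
    obtain ⟨i, rfl⟩ := hx
    exact ⟨LinearMap.proj i, fun v => by simp⟩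
  | zero => exact ⟨0, fun v => by simp⟩
  | add x y hx hy h1 h2 =>
    rw [← homogeneousSubmodule_one_eq_span_X] at hx hy
    obtain ⟨a, ha⟩ := h1 hx
    obtain ⟨b, hb⟩ := h2 hy
    exact ⟨a + b, fun v => by simp [ha, hb]⟩
  | smul c x hx h1 =>
    rw [← homogeneousSubmodule_one_eq_span_X] at hx
    obtain ⟨a, ha⟩ := h1 hx
    exact ⟨c • a, fun v => by simp [ha]⟩

/-- Pullback of polynomials along a linear map. -/
noncomputable def pull {m n : ℕ} (e : (Fin m → K) →ₗ[K] (Fin n → K)) :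
    MvPolynomial (Fin n) K →ₐ[K] MvPolynomial (Fin m) K :=
  aeval fun i => ∑ j, C (e (Pi.single j 1) i) * X j

lemma lin_sum {m n : ℕ} (e : (Fin m → K) →ₗ[K] (Fin n → K)) (w : Fin m → K) (i : Fin n) :
    ∑ j, e (Pi.single j 1) i * w j = e w i := by
  conv_rhs => rw [pi_eq_sum_univ' w]
  simp [mul_comm]

lemma pull_X {m n : ℕ} (e : (Fin m → K) →ₗ[K] (Fin n → K)) (i : Fin n) :
    pull e (X i) = ∑ j, C (e (Pi.single j 1) i) * X j := by
  simp [pull]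

lemma eval_pull {m n : ℕ} (e : (Fin m → K) →ₗ[K] (Fin n → K)) (w : Fin m → K)
    (f : MvPolynomial (Fin n) K) : eval w (pull e f) = eval (e w) f := by
  induction f using MvPolynomial.induction_on with
  | C a => simp [pull]
  | add p q hp hq => simp [hp, hq]
  | mul_X p i hp => simp [hp, pull_X, lin_sum]

lemma pull_hom {m n : ℕ} (e : (Fin m → K) →ₗ[K] (Fin n → K)) {f : MvPolynomial (Fin n) K}
    {d : ℕ} (hf : f.IsHomogeneous d) : (pull e f).IsHomogeneous d := by
  have := hf.aeval (fun i => ∑ j, C (e (Pi.single j 1) i) * X (R := K) j) (n := 1)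
    fun i => IsHomogeneous.sum _ _ _ fun j _ => isHomogeneous_C_mul_X _ _
  simpa [pull] using this

lemma pderiv_pull {m n : ℕ} (e : (Fin m → K) →ₗ[K] (Fin n → K)) (j : Fin m)
    (f : MvPolynomial (Fin n) K) :
    pderiv j (pull e f) = ∑ i, C (e (Pi.single j 1) i) * pull e (pderiv i f) := by
  induction f using MvPolynomial.induction_on with
  | C a => simp [pull]
  | add p q hp hq => simp [hp, hq, mul_add, Finset.sum_add_distrib]
  | mul_X p k hp =>
    have h1 : pderiv j (pull e (X k)) = C (e (Pi.single j 1) k) := by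
      rw [pull_X, map_sum, Finset.sum_eq_single j]
      · simp
      · intro b _ hb; simp [pderiv_X_of_ne hb]
      · simp
    rw [map_mul, pderiv_mul, hp, h1]
    have h2 : ∀ i, C (e (Pi.single j 1) i) * pull e (pderiv i (p * X k)) =
        C (e (Pi.single j 1) i) * pull e (pderiv i p) * pull e (X k) +
        C (e (Pi.single j 1) i) * (pull e p * pull e (pderiv i (X k))) := by
      intro i
      rw [pderiv_mul]; simp only [map_add, map_mul]; ring
    rw [Finset.sum_congr rfl fun i _ => h2 i, Finset.sum_add_distrib, ← Finset.sum_mul]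
    congr 1
    rw [Finset.sum_eq_single k]
    · simp [mul_comm]
    · intro b _ hb; simp [pderiv_X_of_ne hb.symm]
    · simp

lemma proportional {m : ℕ} {f β : MvPolynomial (Fin m) K} (hf : f.IsHomogeneous 1)
    (hβ : β.IsHomogeneous 1) (hβ0 : β ≠ 0)
    (h : {w : Fin m → K | eval w β = 0} = {w : Fin m → K | eval w f = 0}) :
    ∃ c : K, β = c • f := by
  obtain ⟨a, ha⟩ := exists_linear hf
  obtain ⟨b, hb⟩ := exists_linear hβ
  have h1 := mem_span_of_iInf_ker_le_ker (ι := Unit) (L := fun _ => a) (K := b) (by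
    intro w hw
    have h2 : w ∈ {w : Fin m → K | eval w f = 0} := by
      simpa [ha] using hw
    rw [← h] at h2
    simpa [hb] using h2)
  simp only [Set.range_const, Submodule.mem_span_singleton] at h1
  obtain ⟨c, hc⟩ := h1
  exact ⟨c, MvPolynomial.funext fun w => by simp [ha, hb, ← hc]⟩

lemma exists_retraction {m : ℕ} (hm : m + 1 = ℓ) {H : MvPolynomial (Fin ℓ) K}
    (hH : H.IsHomogeneous 1) (hH0 : H ≠ 0) (e : (Fin m → K) →ₗ[K] (Fin ℓ → K))
    (he : Function.Injective e) (heH : ∀ w, eval (e w) H = 0) :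
    ∃ (p : (Fin ℓ → K) →ₗ[K] (Fin m → K)) (u : Fin ℓ → K),
      ∀ v, e (p v) = v - eval v H • u := by
  obtain ⟨φ, hφ⟩ := exists_linear hH
  have hφ0 : φ ≠ 0 := by
    rintro rfl
    exact hH0 (MvPolynomial.funext fun v => by simp [hφ])
  obtain ⟨u, hu⟩ := LinearMap.surjective hφ0 1
  have hle : LinearMap.range e ≤ LinearMap.ker φ := by
    rintro _ ⟨w, rfl⟩
    simpa [hφ] using heH w
  have heq : LinearMap.range e = LinearMap.ker φ := by
    apply Submodule.eq_of_le_of_finrank_eq hle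
    rw [LinearMap.finrank_range_of_inj he]
    have h1 := LinearMap.finrank_range_add_finrank_ker φ
    rw [LinearMap.range_eq_top.2 (LinearMap.surjective hφ0)] at h1
    simp at h1 ⊢
    omega
  obtain ⟨p₀, hp₀⟩ := LinearMap.exists_leftInverse_of_injective e (LinearMap.ker_eq_bot.2 he)
  refine ⟨p₀ ∘ₗ (LinearMap.id - φ.smulRight u), u, fun v => ?_⟩
  have h2 : v - φ v • u ∈ LinearMap.range e := by
    rw [heq]; simp [hu]
  obtain ⟨w, hw⟩ := h2
  have h3 : p₀ (e w) = w := LinearMap.congr_fun hp₀ w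
  rw [hφ, ← hw]
  simp [← hw, h3]

lemma sub_pull_dvd {m : ℕ} {H : MvPolynomial (Fin ℓ) K} {e : (Fin m → K) →ₗ[K] (Fin ℓ → K)}
    {p : (Fin ℓ → K) →ₗ[K] (Fin m → K)} {u : Fin ℓ → K}
    (hp : ∀ v, e (p v) = v - eval v H • u) (f : MvPolynomial (Fin ℓ) K) :
    H ∣ f - pull p (pull e f) := by
  induction f using MvPolynomial.induction_on with
  | C a => simp [pull]
  | add p q hp hq =>
    simp only [map_add]
    convert dvd_add hp hq using 1
    ring
  | mul_X q i hq =>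
    have h1 : H ∣ X i - pull p (pull e (X i)) := by
      refine ⟨C (u i), MvPolynomial.funext fun v => ?_⟩
      simp [eval_pull, hp]
    simp only [map_mul]
    convert dvd_add (dvd_mul_of_dvd_left hq (X i)) (dvd_mul_of_dvd_right h1 (pull p (pull e q)))
      using 1
    ring

lemma main_aux {m : ℕ} (hm : m + 1 = ℓ) (hl : 2 ≤ ℓ) (A : Finset (MvPolynomial (Fin ℓ) K))
    (hA : IsArrangement A) (H : MvPolynomial (Fin ℓ) K) (hH : H ∈ A)
    (hA'ne : (A.erase H).Nonempty)
    (B : Finset (MvPolynomial (Fin m) K)) (hB : IsArrangement B)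
    (e : (Fin m → K) →ₗ[K] (Fin ℓ → K))
    (he : Function.Injective e) (heH : ∀ w, eval (e w) H = 0)
    (hBA : (B.image fun β => {w : Fin m → K | eval w β = 0}) =
      ((A.erase H).image fun L => {w : Fin m → K | eval (e w) L = 0}))
    (h : mdr A = mdr (A.erase H)) :
    mdr B ≤ mdr A := by
  by_contra hlt
  push Not at hlt
  obtain ⟨hH0, hH1⟩ := hA.1 H hH
  obtain ⟨p, u, hp⟩ := exists_retraction hm hH1 hH0 e he heH
  obtain ⟨θ, hθ0, hθ, hθQ⟩ := exists_rel hl hA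
  have hdvd := dvd_of_applyDer_eq_zero hA hθQ
  have hpe : ∀ w, p (e w) = w := fun w => he (by simp [hp, heH])
  have hep : ∀ f, pull e (pull p f) = f := fun f =>
    MvPolynomial.funext fun w => by simp [eval_pull, hpe]
  have hpH : pull e H = 0 := MvPolynomial.funext fun w => by simp [eval_pull, heH]
  -- the restricted derivation
  let η : Fin m → MvPolynomial (Fin m) K := fun j =>
    ∑ i, C (p (Pi.single i 1) j) * pull e (θ i)
  have hη : ∀ j, (η j).IsHomogeneous (mdr A) := fun j =>
    IsHomogeneous.sum _ _ _ fun i _ => (pull_hom e (hθ i)).C_mul _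
  -- `e` applied to the restriction recovers the coefficients along `H`
  have hηe : ∀ i, ∑ j, C (e (Pi.single j 1) i) * η j = pull e (θ i) := by
    intro i
    refine MvPolynomial.funext fun w => ?_
    have h1 : ∀ j, eval w (η j) = p (fun k => eval (e w) (θ k)) j := by
      intro j
      rw [← lin_sum p]
      simp [η, eval_pull]
    have h2 : eval (fun k => eval (e w) (θ k)) H = 0 := by
      obtain ⟨g, hg⟩ := hdvd H hH
      have h3 : applyDer θ H = eval₂ C θ H := by
        have hH' : H ∈ homogeneousSubmodule (Fin ℓ) K 1 := hH1
        rw [homogeneousSubmodule_one_eq_span_X] at hH'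
        clear * - hH'
        induction hH' using Submodule.span_induction with
        | mem x hx =>
          obtain ⟨i, rfl⟩ := hx
          simp [applyDer, pderiv_X, Pi.single_apply]
        | zero => simp [applyDer]
        | add x y hx hy h1 h2 =>
          rw [eval₂_add, ← h1, ← h2]
          simp [applyDer, mul_add, Finset.sum_add_distrib]
        | smul c x hx h1 =>
          rw [smul_eq_C_mul, eval₂_mul, ← h1, eval₂_C]
          simp only [applyDer, pderiv_C_mul, Finset.mul_sum]
          exact Finset.sum_congr rfl fun j _ => by ring
      have h4 : eval (e w) (applyDer θ H) = 0 := by rw [hg, map_mul, heH, zero_mul]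
      rw [h3] at h4
      have h5 : eval (e w) (eval₂ C θ H) = eval (fun k => eval (e w) (θ k)) H := by
        clear * -
        induction H using MvPolynomial.induction_on with
        | C a => simp
        | add p q hp hq => simp [hp, hq]
        | mul_X p i hp => simp [hp]
      rw [← h5, h4]
    simp only [map_sum, map_mul, eval_C, h1, lin_sum, hp, h2, eval_pull]
    simp
  have hηpull : ∀ f, applyDer η (pull e f) = pull e (applyDer θ f) := by
    intro f
    simp only [applyDer, pderiv_pull, map_sum, map_mul, ← hηe, Finset.mul_sum, Finset.sum_mul]
    rw [Finset.sum_comm]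
    exact Finset.sum_congr rfl fun i _ => Finset.sum_congr rfl fun j _ => by ring
  have hηdvd : ∀ β ∈ B, β ∣ applyDer η β := by
    intro β hβ
    have h1 : {w : Fin m → K | eval w β = 0} ∈
        (B.image fun β => {w : Fin m → K | eval w β = 0}) := Finset.mem_image_of_mem _ hβ
    rw [hBA, Finset.mem_image] at h1
    obtain ⟨L, hL, h1⟩ := h1
    have hLA := Finset.mem_of_mem_erase hL
    obtain ⟨c, hc⟩ := proportional (pull_hom e (hA.1 L hLA).2) (hB.1 β hβ).2 (hB.1 β hβ).1
      (by simp only [eval_pull]; exact h1.symm)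
    obtain ⟨g, hg⟩ := hdvd L hLA
    refine ⟨pull e g, ?_⟩
    have h2 : applyDer η β = C c * applyDer η (pull e L) := by
      rw [hc, smul_eq_C_mul]
      simp only [applyDer, pderiv_C_mul, Finset.mul_sum]
      exact Finset.sum_congr rfl fun j _ => by ring
    rw [h2, hηpull, hg, hc, smul_eq_C_mul, map_mul, mul_assoc]
  have hBne : B.Nonempty := by
    have := hA'ne.image fun L => {w : Fin m → K | eval (e w) L = 0}
    rw [← hBA] at this
    simpa using this
  obtain ⟨f, hf, hηf⟩ := proj_lemma hB hBne hη hηdvd hlt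
  -- lift
  have hlift : ∀ i, H ∣ θ i - pull p f * X i := by
    intro i
    have h1 := sub_pull_dvd hp (θ i - pull p f * X i)
    have h2 : pull e (θ i - pull p f * X i) = 0 := by
      rw [map_sub, map_mul, hep, ← hηe, pull_X, Finset.mul_sum, ← Finset.sum_sub_distrib]
      exact Finset.sum_eq_zero fun j _ => by rw [hηf]; ring
    simpa [h2] using h1
  choose φ hφ using hlift
  have hEuler : ∀ g, ¬ ∀ i, θ i = g * X i := by
    intro g hg
    have h1 : applyDer θ (Qpoly A) = g * ((A.card : MvPolynomial (Fin ℓ) K) * Qpoly A) := by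
      rw [← applyDer_euler (Qpoly_hom hA)]
      congr 1
      funext i; exact hg i
    rw [hθQ] at h1
    have hn : (A.card : MvPolynomial (Fin ℓ) K) ≠ 0 := by
      exact_mod_cast (Finset.card_pos.2 ⟨H, hH⟩).ne'
    have h2 : g = 0 := by
      have := h1.symm
      simpa [hn, Qpoly_ne_zero hA] using this
    apply hθ0
    funext i
    simp [hg, h2]
  have hdiff : ∀ i, (H * φ i).IsHomogeneous (mdr A) := by
    intro i
    rw [← hφ]
    refine (hθ i).sub ?_
    rcases hf with hf | ⟨c, hc, hf⟩
    · simpa [hf] using isHomogeneous_zero _ _ _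
    · rw [← hc]; exact (pull_hom p hf).mul (isHomogeneous_X _ _)
  have hφhom := fun i => hom_cancel hH1 hH0 (hdiff i)
  rcases Nat.eq_zero_or_pos (mdr A) with hr | hr
  · refine hEuler (pull p f) fun i => ?_
    rcases hφhom i with h1 | ⟨c, hc, -⟩
    · have := hφ i
      rw [h1, mul_zero] at this
      exact sub_eq_zero.1 this
    · omega
  · have hA' : IsArrangement (A.erase H) :=
      ⟨fun α hα => hA.1 α (Finset.mem_of_mem_erase hα), fun α hα β hβ =>
        hA.2 α (Finset.mem_of_mem_erase hα) β (Finset.mem_of_mem_erase hβ)⟩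
    have hφ1 : ∀ i, (φ i).IsHomogeneous (mdr A - 1) := by
      intro i
      rcases hφhom i with h1 | ⟨c, hc, h1⟩
      · rw [h1]; exact isHomogeneous_zero _ _ _
      · have : mdr A - 1 = c := by omega
        rwa [this]
    have hφdvd : ∀ L ∈ A.erase H, L ∣ applyDer φ L := by
      intro L hL
      have hLA := Finset.mem_of_mem_erase hL
      have hLne := Finset.ne_of_mem_erase hL
      have h1 : H * applyDer φ L = applyDer θ L - pull p f * L := by
        rw [← applyDer_mul_left]
        simp only [← hφ]
        rw [applyDer_sub, applyDer_euler (hA.1 L hLA).2]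
        simp
      have h2 : L ∣ H * applyDer φ L := by
        rw [h1]; exact dvd_sub (hdvd L hLA) (dvd_mul_left _ _)
      exact ((form_prime (hA.1 L hLA).1 (hA.1 L hLA).2).dvd_or_dvd h2).resolve_left
        (form_not_dvd hA hLA hH hLne)
    obtain ⟨g, -, hg⟩ := proj_lemma hA' hA'ne hφ1 hφdvd (by omega)
    refine hEuler (pull p f + H * g) fun i => ?_
    have := hφ i
    rw [hg] at this
    linear_combination this

/-- Let `ℓ ≥ 2`, let `A` be an essential hyperplane arrangement in `K^ℓ`,
let `H ∈ A`, and suppose `A' = A \ {H}` is also essential and nonempty. Let `r = r(A)`,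
`r' = r(A')` and `r'' = r(A^H)`, where `A^H` is the restricted arrangement in
`H ≅ K^{ℓ-1}`. If `r = r'`, then `r'' ≤ r`. -/
theorem mdr_restriction_le (hl : 2 ≤ ℓ) (A : Finset (MvPolynomial (Fin ℓ) K))
    (hA : IsArrangement A) (hAess : IsEssential A)
    (H : MvPolynomial (Fin ℓ) K) (hH : H ∈ A)
    (hA'ess : IsEssential (A.erase H)) (hA'ne : (A.erase H).Nonempty)
    (B : Finset (MvPolynomial (Fin (ℓ - 1)) K)) (hB : IsRestrictionOf A H B)
    (h : mdr A = mdr (A.erase H)) :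
    mdr B ≤ mdr A := by

  obtain ⟨hB1, e, he, heH, hBA⟩ := hB
  exact main_aux (by omega) hl A hA H hH hA'ne B hB1 e he heH hBA h
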